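/- arXiv:1204.3418 — 2 statements merged into one kernel-verified Lean document; each statement's English description precedes it below -/
import Mathlib

section
/- The function f(x) = 1 - e^{-x} on [0, ∞) is in class 𝒜: it is geometrically concave, i.e. (1 - e^{-x})(1 - e^{-y}) ≤ (1 - e^{-√(xy)})² for all x, y ≥ 0, and it satisfies 0 ≤ x f'(x) ≤ f(x) for all x ≥ 0, i.e. 0 ≤ x e^{-x} ≤ 1 - e^{-x}. -/
/-!
In the logarithmic coordinate `x = exp t`, geometric concavity of a positive function `f` is
midpoint concavity of `t ↦ log (f (exp t))`, whose derivative is the elasticity `x * f' x / f x`.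
For `f x = 1 - exp (-x)` the elasticity is `x / (exp x - 1)`, the reciprocal of the slope of the
secant of `exp` between `0` and `x`; it is decreasing in `x` because `exp` is convex.
-/

open Set

/-- Midpoint geometric concavity on `s`: the value at the geometric mean is at least the geometric
mean of the values. As `√` vanishes on negative reals, this is meant for `s ⊆ [0, ∞)` and `f`
nonnegative on `s`. -/
def GeometricallyConcaveOn (s : Set ℝ) (f : ℝ → ℝ) : Prop :=
  ∀ ⦃x⦄, x ∈ s → ∀ ⦃y⦄, y ∈ s → √(f x * f y) ≤ f √(x * y)

namespace GeometricallyConcaveOn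

variable {f : ℝ → ℝ}

theorem of_concaveOn_log_comp_exp (hpos : ∀ x ∈ Ioi 0, 0 < f x)
    (hconc : ConcaveOn ℝ univ fun t ↦ Real.log (f (Real.exp t))) :
    GeometricallyConcaveOn (Ioi 0) f := by
  intro x hx y hy
  have hxy : 0 < x * y := mul_pos hx hy
  have hfxy : 0 < f x * f y := mul_pos (hpos x hx) (hpos y hy)
  have exp_midpoint : Real.exp (1 / 2 * Real.log x + 1 / 2 * Real.log y) = √(x * y) := by
    rw [← mul_add, ← Real.log_mul hx.ne' hy.ne', one_div_mul_eq_div, Real.exp_half,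
      Real.exp_log hxy]
  have midpoint_le : 1 / 2 * Real.log (f x) + 1 / 2 * Real.log (f y) ≤ Real.log (f √(x * y)) := by
    simpa only [smul_eq_mul, exp_midpoint, Real.exp_log hx, Real.exp_log hy] using
      hconc.2 (mem_univ (Real.log x)) (mem_univ (Real.log y)) one_half_pos.le one_half_pos.le
        (add_halves 1)
  rw [← Real.log_le_log_iff (Real.sqrt_pos.2 hfxy) (hpos _ (Real.sqrt_pos.2 hxy))]
  calc Real.log √(f x * f y) = 1 / 2 * Real.log (f x) + 1 / 2 * Real.log (f y) := by
        rw [Real.log_sqrt hfxy.le, Real.log_mul (hpos x hx).ne' (hpos y hy).ne']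
        ring
    _ ≤ Real.log (f √(x * y)) := midpoint_le

theorem Ici_of_Ioi (hf : GeometricallyConcaveOn (Ioi 0) f) (hf0 : f 0 = 0) :
    GeometricallyConcaveOn (Ici 0) f := by
  intro x hx y hy
  rcases (mem_Ici.1 hx).eq_or_lt with rfl | hx
  · simp [hf0]
  rcases (mem_Ici.1 hy).eq_or_lt with rfl | hy
  · simp [hf0]
  exact hf hx hy

end GeometricallyConcaveOn

theorem hasDerivAt_log_comp_exp {f : ℝ → ℝ} {t : ℝ} (hf : DifferentiableAt ℝ f (Real.exp t))
    (hne : f (Real.exp t) ≠ 0) :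
    HasDerivAt (fun u ↦ Real.log (f (Real.exp u))) (Real.exp t * logDeriv f (Real.exp t)) t := by
  have hcomp : HasDerivAt (fun u ↦ f (Real.exp u)) (deriv f (Real.exp t) * Real.exp t) t :=
    hf.hasDerivAt.comp t (Real.hasDerivAt_exp t)
  convert hcomp.log hne using 1
  rw [logDeriv_apply, mul_div_assoc', mul_comm]

theorem concaveOn_log_comp_exp_of_antitoneOn_mul_logDeriv {f : ℝ → ℝ}
    (hdiff : ∀ x ∈ Ioi 0, DifferentiableAt ℝ f x) (hne : ∀ x ∈ Ioi 0, f x ≠ 0)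
    (hanti : AntitoneOn (fun x ↦ x * logDeriv f x) (Ioi 0)) :
    ConcaveOn ℝ univ fun t ↦ Real.log (f (Real.exp t)) := by
  have hderiv (t : ℝ) := hasDerivAt_log_comp_exp (hdiff _ t.exp_pos) (hne _ t.exp_pos)
  refine Antitone.concaveOn_univ_of_deriv (fun t ↦ (hderiv t).differentiableAt) fun s t hst ↦ ?_
  rw [(hderiv s).deriv, (hderiv t).deriv]
  exact hanti s.exp_pos t.exp_pos (Real.exp_le_exp.2 hst)

theorem antitoneOn_div_exp_sub_one : AntitoneOn (fun x ↦ x / (Real.exp x - 1)) (Ioi 0) := by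
  intro x hx y hy hxy
  have hslope : (Real.exp x - 1) / x ≤ (Real.exp y - 1) / y := by
    simpa only [slope_def_field, Real.exp_zero, sub_zero] using
      convexOn_exp.slope_mono (mem_univ 0) ⟨mem_univ x, hx.ne'⟩ ⟨mem_univ y, hy.ne'⟩ hxy
  have hslope_pos : 0 < (Real.exp x - 1) / x := div_pos (sub_pos.2 (Real.one_lt_exp_iff.2 hx)) hx
  simpa only [inv_div] using inv_anti₀ hslope_pos hslope

theorem hasDerivAt_one_sub_exp_neg (x : ℝ) :
    HasDerivAt (fun t ↦ 1 - Real.exp (-t)) (Real.exp (-x)) x := by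
  simpa using (hasDerivAt_neg x).exp.const_sub 1

theorem one_sub_exp_neg_pos {x : ℝ} (hx : 0 < x) : 0 < 1 - Real.exp (-x) :=
  sub_pos.2 (Real.exp_lt_one_iff.2 (neg_lt_zero.2 hx))

/-- At `x = 0` both sides are `1 / 0 = 0`. -/
theorem logDeriv_one_sub_exp_neg (x : ℝ) :
    logDeriv (fun t ↦ 1 - Real.exp (-t)) x = 1 / (Real.exp x - 1) := by
  have exp_mul : Real.exp x * (1 - Real.exp (-x)) = Real.exp x - 1 := by
    rw [mul_sub, ← Real.exp_add, add_neg_cancel, Real.exp_zero, mul_one]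
  rw [logDeriv_apply, (hasDerivAt_one_sub_exp_neg x).deriv, ← exp_mul, Real.exp_neg, one_div,
    mul_inv, div_eq_mul_inv]

theorem geometricallyConcaveOn_one_sub_exp_neg :
    GeometricallyConcaveOn (Ici 0) fun x ↦ 1 - Real.exp (-x) := by
  have elasticity_antitone :
      AntitoneOn (fun x ↦ x * logDeriv (fun t ↦ 1 - Real.exp (-t)) x) (Ioi 0) := by
    simpa only [logDeriv_one_sub_exp_neg, mul_one_div] using antitoneOn_div_exp_sub_one
  refine .Ici_of_Ioi (.of_concaveOn_log_comp_exp (fun x ↦ one_sub_exp_neg_pos) ?_) (by simp)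
  exact concaveOn_log_comp_exp_of_antitoneOn_mul_logDeriv
    (fun x _ ↦ (hasDerivAt_one_sub_exp_neg x).differentiableAt)
    (fun x hx ↦ (one_sub_exp_neg_pos hx).ne') elasticity_antitone

theorem mul_exp_neg_le_one_sub_exp_neg (x : ℝ) : x * Real.exp (-x) ≤ 1 - Real.exp (-x) := by
  rw [le_sub_iff_add_le, ← add_one_mul]
  calc (x + 1) * Real.exp (-x) ≤ Real.exp x * Real.exp (-x) := by
        gcongr
        exact Real.add_one_le_exp x
    _ = 1 := by rw [← Real.exp_add, add_neg_cancel, Real.exp_zero]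

/-- **Theorem.** The function `f(x) = 1 - e^{-x}` on `[0, ∞)` is in class 𝒜: it is
geometrically concave, i.e. `(1-e^{-x})(1-e^{-y}) ≤ (1-e^{-√(xy)})²` for all `x, y ≥ 0`, and
it satisfies `0 ≤ x f'(x) ≤ f(x)`, i.e. `0 ≤ x e^{-x} ≤ 1 - e^{-x}`, for all `x ≥ 0`. -/
theorem one_sub_exp_neg_mem_classA :
    (∀ x : ℝ, 0 ≤ x → ∀ y : ℝ, 0 ≤ y →
      (1 - Real.exp (-x)) * (1 - Real.exp (-y))
        ≤ (1 - Real.exp (-Real.sqrt (x * y))) ^ 2) ∧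
    (∀ x : ℝ, 0 ≤ x →
      0 ≤ x * Real.exp (-x) ∧ x * Real.exp (-x) ≤ 1 - Real.exp (-x)) := by
  refine ⟨fun x hx y hy ↦ ?_, fun x hx ↦ ⟨by positivity, mul_exp_neg_le_one_sub_exp_neg x⟩⟩
  have value_nonneg : 0 ≤ 1 - Real.exp (-√(x * y)) := by
    simp only [sub_nonneg, Real.exp_le_one_iff, neg_nonpos, Real.sqrt_nonneg]
  exact (Real.sqrt_le_left value_nonneg).1 (geometricallyConcaveOn_one_sub_exp_neg hx hy)
end

section
/- Let w : [0, ∞) → [0, ∞) be a monotonically increasing geometrically convex function, and let x₁ ≥ x₂ ≥ … ≥ xₙ > 0 and y₁ ≥ y₂ ≥ … ≥ yₙ > 0 satisfy ∏_{j=1}^{k} x_j ≤ ∏_{j=1}^{k} y_j for all k = 1,…,n. Then ∏_{j=1}^{k} w(x_j) ≤ ∏_{j=1}^{k} w(y_j) for all k = 1,…,n; that is, a monotone geometrically convex function preserves log-submajorisation. -/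
/-!
In logarithmic coordinates a positive geometrically convex `w` becomes `f t = log (w (exp t))`,
which is midpoint convex, and monotonicity supplies the local boundedness that upgrades midpoint
convexity to convexity. Log-submajorisation of `x` by `y` becomes weak majorisation of `log x` by
`log y`, so the claim is the Tomić–Weyl inequality: summing the subgradient inequality
`f (y i) - f (x i) ≥ c i * (y i - x i)`, where `c i` is the right derivative of `f` at `x i`,
reduces it to Abel summation, as `c` is nonnegative and antitone. If `w` vanishes at one positive
point then geometric convexity makes it vanish on all of `(0, ∞)`.
-/

open Finset Set Filter Topology

section MidpointConvex

variable {E : Type*} [AddCommGroup E] [Module ℝ E] {s : Set E} {f : E → ℝ}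

/-- Midpoint convexity (Jensen convexity) of a real function on a set, which becomes convexity in
the presence of upper bounds on segments. -/
def MidpointConvexOn (s : Set E) (f : E → ℝ) : Prop :=
  ∀ ⦃x⦄, x ∈ s → ∀ ⦃y⦄, y ∈ s → f (midpoint ℝ x y) ≤ midpoint ℝ (f x) (f y)

namespace MidpointConvexOn

lemma le_mul_half_pow {g : ℝ → ℝ} {M : ℝ} (hg : MidpointConvexOn (Icc 0 1) g)
    (h0 : g 0 ≤ 0) (h1 : g 1 ≤ 0) (hM : ∀ t ∈ Icc (0 : ℝ) 1, g t ≤ M) (m : ℕ) :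
    ∀ t ∈ Icc (0 : ℝ) 1, g t ≤ M * (1 / 2) ^ m := by
  simp only [MidpointConvexOn, midpoint_eq_smul_add, smul_eq_mul, invOf_eq_inv] at hg
  induction m with
  | zero => simpa only [pow_zero, mul_one] using hM
  | succ m ih =>
    rintro t ⟨ht0, ht1⟩
    rcases le_total t (1 / 2) with ht | ht
    · have hmem : 2 * t ∈ Icc (0 : ℝ) 1 := ⟨by linarith, by linarith⟩
      have hmid := hg (left_mem_Icc.2 zero_le_one) hmem
      rw [show (2 : ℝ)⁻¹ * (0 + 2 * t) = t by ring] at hmid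
      rw [pow_succ]
      linarith [ih _ hmem]
    · have hmem : 2 * t - 1 ∈ Icc (0 : ℝ) 1 := ⟨by linarith, by linarith⟩
      have hmid := hg (right_mem_Icc.2 zero_le_one) hmem
      rw [show (2 : ℝ)⁻¹ * (1 + (2 * t - 1)) = t by ring] at hmid
      rw [pow_succ]
      linarith [ih _ hmem]

lemma nonpos_of_bddAbove {g : ℝ → ℝ} (hg : MidpointConvexOn (Icc 0 1) g)
    (h0 : g 0 ≤ 0) (h1 : g 1 ≤ 0) (hbdd : BddAbove (g '' Icc 0 1)) :
    ∀ t ∈ Icc (0 : ℝ) 1, g t ≤ 0 := by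
  obtain ⟨M, hM⟩ := hbdd
  intro t ht
  have hlim : Tendsto (fun m : ℕ ↦ M * (1 / 2 : ℝ) ^ m) atTop (𝓝 (M * 0)) :=
    (tendsto_pow_atTop_nhds_zero_of_lt_one (by norm_num) (by norm_num)).const_mul M
  rw [mul_zero] at hlim
  exact ge_of_tendsto' hlim fun m ↦
    hg.le_mul_half_pow h0 h1 (fun u hu ↦ hM (mem_image_of_mem g hu)) m t ht

lemma sub_lineMap (hs : Convex ℝ s) (hf : MidpointConvexOn s f) {x y : E} (hx : x ∈ s)
    (hy : y ∈ s) (a b : ℝ) :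
    MidpointConvexOn (Icc 0 1)
      (fun t : ℝ ↦ f (AffineMap.lineMap x y t) - AffineMap.lineMap a b t) := by
  intro t ht u hu
  have hmid := hf (hs.lineMap_mem hx hy ht) (hs.lineMap_mem hx hy hu)
  simp only [AffineMap.map_midpoint]
  simp only [midpoint_eq_smul_add, smul_eq_mul] at hmid ⊢
  linarith

theorem convexOn (hs : Convex ℝ s) (hf : MidpointConvexOn s f)
    (hbdd : ∀ x ∈ s, ∀ y ∈ s, BddAbove (f '' segment ℝ x y)) : ConvexOn ℝ s f := by
  refine ⟨hs, fun x hx y hy a b ha hb hab ↦ ?_⟩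
  let g : ℝ → ℝ := fun t ↦ f (AffineMap.lineMap x y t) - AffineMap.lineMap (f x) (f y) t
  have hgbdd : BddAbove (g '' Icc 0 1) := by
    obtain ⟨B, hB⟩ := hbdd x hx y hy
    refine ⟨B - min (f x) (f y), forall_mem_image.2 fun t ht ↦ sub_le_sub (hB ?_) ?_⟩
    · exact mem_image_of_mem f (segment_eq_image_lineMap ℝ x y ▸ mem_image_of_mem _ ht)
    · exact (convex_Ici (min (f x) (f y))).lineMap_mem
        (Set.mem_Ici.2 (min_le_left _ _)) (Set.mem_Ici.2 (min_le_right _ _)) ht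
  have hg := (hf.sub_lineMap hs hx hy (f x) (f y)).nonpos_of_bddAbove
    (by simp) (by simp) hgbdd b ⟨hb, by linarith⟩
  rw [sub_nonpos, AffineMap.lineMap_apply_module, AffineMap.lineMap_apply_module] at hg
  rwa [← eq_sub_of_add_eq hab] at hg

theorem convexOn_of_monotoneOn {s : Set ℝ} {f : ℝ → ℝ} (hs : Convex ℝ s)
    (hf : MidpointConvexOn s f) (hmono : MonotoneOn f s) : ConvexOn ℝ s f := by
  refine hf.convexOn hs fun x hx y hy ↦ ⟨f (max x y), forall_mem_image.2 fun z hz ↦ ?_⟩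
  have hmax : max x y ∈ s := by rcases max_choice x y with h | h <;> rwa [h]
  refine hmono (hs.segment_subset hx hy hz) hmax ?_
  rw [segment_eq_uIcc] at hz
  exact hz.2

end MidpointConvexOn

end MidpointConvex

section TomicWeyl

variable {f : ℝ → ℝ} {s : Set ℝ} {a b : ℝ}

lemma add_rightDeriv_mul_sub_le (hf : ConvexOn ℝ s f) (ha : a ∈ interior s) (hb : b ∈ s) :
    f a + derivWithin f (Ioi a) a * (b - a) ≤ f b := by
  rcases lt_trichotomy a b with hab | rfl | hba
  · have hslope := hf.rightDeriv_le_slope_of_mem_interior ha hb hab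
    rw [slope_def_field, le_div_iff₀ (sub_pos.2 hab)] at hslope
    linarith
  · simp
  · have hslope := (hf.slope_le_leftDeriv_of_mem_interior hb ha hba).trans
      (hf.leftDeriv_le_rightDeriv_of_mem_interior ha)
    rw [slope_def_field, div_le_iff₀ (sub_pos.2 hba)] at hslope
    linarith

lemma rightDeriv_nonneg_of_monotoneOn (hmono : MonotoneOn f s) (ha : a ∈ interior s) :
    0 ≤ derivWithin f (Ioi a) a := by
  rw [← derivWithin_inter (mem_interior_iff_mem_nhds.1 ha)]
  exact (hmono.mono inter_subset_right).derivWithin_nonneg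

-- Allowing any lower bound `m` of `c` makes the induction work: `m` becomes `c a` when the
-- maximal index `a` is removed.
lemma mul_sum_le_sum_mul_of_antitoneOn {ι R : Type*} [LinearOrder ι] [Semiring R] [PartialOrder R]
    [IsOrderedRing R] {c d : ι → R} (t : Finset ι) {m : R} (hc : AntitoneOn c t)
    (hm : ∀ i ∈ t, m ≤ c i) (hd : ∀ k ∈ t, 0 ≤ ∑ i ∈ t with i ≤ k, d i) :
    m * ∑ i ∈ t, d i ≤ ∑ i ∈ t, c i * d i := by
  induction t using Finset.induction_on_max generalizing m with
  | empty => simp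
  | insert a t hlt ih =>
    have ha : a ∉ t := fun h ↦ (hlt a h).false
    have hsum_nonneg : 0 ≤ ∑ i ∈ insert a t, d i := by
      have hle : ∀ i ∈ insert a t, i ≤ a :=
        (forall_mem_insert _ _ _).2 ⟨le_rfl, fun i hi ↦ (hlt i hi).le⟩
      simpa only [filter_true_of_mem hle] using hd a (mem_insert_self a t)
    have hprefix : c a * ∑ i ∈ t, d i ≤ ∑ i ∈ t, c i * d i := by
      refine ih (hc.mono (by simp)) (fun i hi ↦ ?_) fun k hk ↦ ?_
      · exact hc (by simp [hi]) (by simp) (hlt i hi).le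
      · simpa only [filter_insert, (hlt k hk).not_ge, if_false] using hd k (mem_insert_of_mem hk)
    calc m * ∑ i ∈ insert a t, d i
        ≤ c a * ∑ i ∈ insert a t, d i :=
          mul_le_mul_of_nonneg_right (hm a (mem_insert_self a t)) hsum_nonneg
      _ = c a * d a + c a * ∑ i ∈ t, d i := by rw [sum_insert ha, mul_add]
      _ ≤ c a * d a + ∑ i ∈ t, c i * d i := add_le_add_right hprefix _
      _ = ∑ i ∈ insert a t, c i * d i := by rw [sum_insert ha]

variable {ι : Type*} [LinearOrder ι] [LocallyFiniteOrderBot ι] {x y : ι → ℝ}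

lemma sum_Iic_mul_nonneg_of_antitone {R : Type*} [Semiring R] [PartialOrder R] [IsOrderedRing R]
    {c d : ι → R} (hc : Antitone c) (hc_nonneg : ∀ i, 0 ≤ c i)
    (hd : ∀ k, 0 ≤ ∑ i ∈ Finset.Iic k, d i) (k : ι) : 0 ≤ ∑ i ∈ Finset.Iic k, c i * d i := by
  rw [← zero_mul (∑ i ∈ Finset.Iic k, d i)]
  refine mul_sum_le_sum_mul_of_antitoneOn _ (hc.antitoneOn _) (fun i _ ↦ hc_nonneg i) fun j hj ↦ ?_
  have hfilter : {i ∈ Finset.Iic k | i ≤ j} = Finset.Iic j := by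
    ext i
    simpa using fun hij : i ≤ j ↦ hij.trans (Finset.mem_Iic.1 hj)
  rw [hfilter]
  exact hd j

/-- Weak majorisation, compared on initial segments of the index set. The families are not
rearranged, so this is the classical relation only when both are antitone. -/
def Submajorised {ι : Type*} [Preorder ι] [LocallyFiniteOrderBot ι] (x y : ι → ℝ) : Prop :=
  ∀ k, ∑ i ∈ Finset.Iic k, x i ≤ ∑ i ∈ Finset.Iic k, y i

theorem Submajorised.comp_convexOn (hxy : Submajorised x y) (hf : ConvexOn ℝ s f)
    (hmono : MonotoneOn f s) (hx_anti : Antitone x) (hx : ∀ i, x i ∈ interior s)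
    (hy : ∀ i, y i ∈ s) : Submajorised (fun i ↦ f (x i)) (fun i ↦ f (y i)) := by
  intro k
  let c : ι → ℝ := fun i ↦ derivWithin f (Ioi (x i)) (x i)
  have hc : Antitone c := fun i j hij ↦ hf.monotoneOn_rightDeriv (hx j) (hx i) (hx_anti hij)
  have habel : 0 ≤ ∑ i ∈ Finset.Iic k, c i * (y i - x i) :=
    sum_Iic_mul_nonneg_of_antitone hc (fun i ↦ rightDeriv_nonneg_of_monotoneOn hmono (hx i))
      (fun j ↦ by simpa only [sum_sub_distrib, sub_nonneg] using hxy j) k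
  calc ∑ i ∈ Finset.Iic k, f (x i)
      ≤ ∑ i ∈ Finset.Iic k, f (x i) + ∑ i ∈ Finset.Iic k, c i * (y i - x i) :=
        le_add_of_nonneg_right habel
    _ = ∑ i ∈ Finset.Iic k, (f (x i) + c i * (y i - x i)) := sum_add_distrib.symm
    _ ≤ ∑ i ∈ Finset.Iic k, f (y i) :=
        sum_le_sum fun i _ ↦ add_rightDeriv_mul_sub_le hf (hx i) (hy i)

end TomicWeyl

section LogSubmajorised

variable {ι : Type*} [Preorder ι] [LocallyFiniteOrderBot ι] {x y : ι → ℝ}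

/-- Log-submajorisation `x ≺_{w(log)} y`, compared on initial segments of the index set. The
families are not rearranged, so this is the classical relation only when both are antitone. -/
def LogSubmajorised (x y : ι → ℝ) : Prop :=
  ∀ k, ∏ i ∈ Finset.Iic k, x i ≤ ∏ i ∈ Finset.Iic k, y i

lemma logSubmajorised_iff_submajorised_log (hx : ∀ i, 0 < x i) (hy : ∀ i, 0 < y i) :
    LogSubmajorised x y ↔ Submajorised (fun i ↦ Real.log (x i)) (fun i ↦ Real.log (y i)) := by
  refine forall_congr' fun k ↦ ?_
  rw [← Real.log_prod fun i _ ↦ (hx i).ne', ← Real.log_prod fun i _ ↦ (hy i).ne',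
    Real.log_le_log_iff (prod_pos fun i _ ↦ hx i) (prod_pos fun i _ ↦ hy i)]

lemma logSubmajorised_fin_iff {n : ℕ} {x y : Fin n → ℝ} :
    LogSubmajorised x y ↔ ∀ k : ℕ, 1 ≤ k → k ≤ n →
      ∏ i ∈ Finset.univ.filter (fun i : Fin n => (i : ℕ) < k), x i
        ≤ ∏ i ∈ Finset.univ.filter (fun i : Fin n => (i : ℕ) < k), y i := by
  have hIic (k : Fin n) : Finset.univ.filter (fun i : Fin n => (i : ℕ) < k + 1) = Finset.Iic k := by
    ext i
    simp
  refine ⟨fun h k hk hkn ↦ ?_, fun h k ↦ ?_⟩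
  · obtain ⟨k, rfl⟩ := Nat.exists_eq_add_of_le' hk
    simpa only [← hIic] using h ⟨k, hkn⟩
  · simpa only [hIic] using h (k + 1) k.val.succ_pos k.isLt

end LogSubmajorised

section GeomConvex

/-- Geometric convexity of `w` on `s`. This is meant for nonnegative `s` and `w`, since `√` is `0`
on negative reals. -/
def GeomConvexOn (s : Set ℝ) (w : ℝ → ℝ) : Prop :=
  ∀ ⦃x⦄, x ∈ s → ∀ ⦃y⦄, y ∈ s → w (√(x * y)) ≤ √(w x * w y)

variable {w : ℝ → ℝ}

lemma monotone_log_comp_exp (hmono : MonotoneOn w (Ioi 0)) (hpos : ∀ a, 0 < a → 0 < w a) :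
    Monotone (fun t ↦ Real.log (w (Real.exp t))) := fun a b hab ↦
  Real.log_le_log (hpos _ (Real.exp_pos a))
    (hmono (Real.exp_pos a) (Real.exp_pos b) (Real.exp_le_exp.2 hab))

namespace GeomConvexOn

lemma nonpos_of_eq_zero (hw : GeomConvexOn (Ioi 0) w) {a b : ℝ} (ha : 0 < a) (hwa : w a = 0)
    (hb : 0 < b) : w b ≤ 0 := by
  have hmean : √(a * (b ^ 2 / a)) = b := by
    rw [mul_div_cancel₀ _ ha.ne', Real.sqrt_sq hb.le]
  simpa only [hmean, hwa, zero_mul, Real.sqrt_zero] using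
    hw ha (show 0 < b ^ 2 / a by positivity)

lemma midpointConvexOn_log_comp_exp (hw : GeomConvexOn (Ioi 0) w) (hpos : ∀ a, 0 < a → 0 < w a) :
    MidpointConvexOn univ (fun t ↦ Real.log (w (Real.exp t))) := by
  intro a _ b _
  have hwa := hpos _ (Real.exp_pos a)
  have hwb := hpos _ (Real.exp_pos b)
  have hmean : Real.exp (midpoint ℝ a b) = √(Real.exp a * Real.exp b) := by
    rw [← Real.exp_add, ← Real.exp_half, midpoint_eq_smul_add, smul_eq_mul, invOf_eq_inv,
      inv_mul_eq_div]
  calc Real.log (w (Real.exp (midpoint ℝ a b)))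
      ≤ Real.log √(w (Real.exp a) * w (Real.exp b)) :=
        Real.log_le_log (hpos _ (Real.exp_pos _))
          (hmean ▸ hw (Real.exp_pos a) (Real.exp_pos b))
    _ = midpoint ℝ (Real.log (w (Real.exp a))) (Real.log (w (Real.exp b))) := by
        rw [Real.log_sqrt (mul_pos hwa hwb).le, Real.log_mul hwa.ne' hwb.ne',
          midpoint_eq_smul_add, smul_eq_mul, invOf_eq_inv, inv_mul_eq_div]

end GeomConvexOn

variable {ι : Type*} [LinearOrder ι] [LocallyFiniteOrderBot ι] {x y : ι → ℝ}

lemma LogSubmajorised.comp_of_pos (hxy : LogSubmajorised x y) (hpos : ∀ a, 0 < a → 0 < w a)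
    (hmono : MonotoneOn w (Ioi 0)) (hw : GeomConvexOn (Ioi 0) w) (hx_anti : Antitone x)
    (hx : ∀ i, 0 < x i) (hy : ∀ i, 0 < y i) :
    LogSubmajorised (fun i ↦ w (x i)) (fun i ↦ w (y i)) := by
  have hf_mono := (monotone_log_comp_exp hmono hpos).monotoneOn univ
  have hf := (hw.midpointConvexOn_log_comp_exp hpos).convexOn_of_monotoneOn convex_univ hf_mono
  have hlog := (logSubmajorised_iff_submajorised_log hx hy).1 hxy
  have hlog_anti : Antitone fun i ↦ Real.log (x i) :=
    fun i j hij ↦ Real.log_le_log (hx j) (hx_anti hij)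
  rw [logSubmajorised_iff_submajorised_log (fun i ↦ hpos _ (hx i)) fun i ↦ hpos _ (hy i)]
  simpa only [Real.exp_log, hx, hy] using
    hlog.comp_convexOn hf hf_mono hlog_anti (by simp) (by simp)

theorem geomConvex_preserves_logSubmajorisation_general
    (hw_nonneg : ∀ a, 0 < a → 0 ≤ w a) (hw_mono : MonotoneOn w (Ioi 0))
    (hw_gconvex : GeomConvexOn (Ioi 0) w) (hx_anti : Antitone x)
    (hx_pos : ∀ i, 0 < x i) (hy_pos : ∀ i, 0 < y i) (hmaj : LogSubmajorised x y) :
    LogSubmajorised (fun i ↦ w (x i)) (fun i ↦ w (y i)) := by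
  by_cases hzero : ∃ a, 0 < a ∧ w a = 0
  · obtain ⟨a, ha, hwa⟩ := hzero
    intro k
    have hwx : w (x k) = 0 :=
      (hw_gconvex.nonpos_of_eq_zero ha hwa (hx_pos k)).antisymm (hw_nonneg _ (hx_pos k))
    simp only [prod_eq_zero (f := fun i ↦ w (x i)) (Finset.mem_Iic.2 le_rfl) hwx]
    exact prod_nonneg fun i _ ↦ hw_nonneg _ (hy_pos i)
  · have hpos : ∀ a, 0 < a → 0 < w a := fun a ha ↦
      (hw_nonneg a ha).lt_of_ne' fun hwa ↦ hzero ⟨a, ha, hwa⟩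
    exact hmaj.comp_of_pos hpos hw_mono hw_gconvex hx_anti hx_pos hy_pos

end GeomConvex

/-- **Lemma.** A monotonically increasing geometrically convex function
`w : [0, ∞) → [0, ∞)` preserves log-submajorisation: if `x₁ ≥ … ≥ xₙ > 0` and
`y₁ ≥ … ≥ yₙ > 0` satisfy `∏_{j≤k} x_j ≤ ∏_{j≤k} y_j` for all `k`, then
`∏_{j≤k} w(x_j) ≤ ∏_{j≤k} w(y_j)` for all `k`. -/
theorem geomConvex_preserves_logSubmajorisation (w : ℝ → ℝ)
    (hw_nonneg : ∀ x : ℝ, 0 ≤ x → 0 ≤ w x)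
    (hw_mono : MonotoneOn w (Set.Ici (0 : ℝ)))
    (hw_gconvex : ∀ x : ℝ, 0 ≤ x → ∀ y : ℝ, 0 ≤ y →
      w (Real.sqrt (x * y)) ≤ Real.sqrt (w x * w y))
    (n : ℕ) (x y : Fin n → ℝ)
    (hx_anti : Antitone x) (hy_anti : Antitone y)
    (hx_pos : ∀ i, 0 < x i) (hy_pos : ∀ i, 0 < y i)
    (hmaj : ∀ k : ℕ, 1 ≤ k → k ≤ n →
      ∏ i ∈ Finset.univ.filter (fun i : Fin n => (i : ℕ) < k), x i
        ≤ ∏ i ∈ Finset.univ.filter (fun i : Fin n => (i : ℕ) < k), y i) :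
    ∀ k : ℕ, 1 ≤ k → k ≤ n →
      ∏ i ∈ Finset.univ.filter (fun i : Fin n => (i : ℕ) < k), w (x i)
        ≤ ∏ i ∈ Finset.univ.filter (fun i : Fin n => (i : ℕ) < k), w (y i) :=
  logSubmajorised_fin_iff.1 <| geomConvex_preserves_logSubmajorisation_general
    (fun a ha ↦ hw_nonneg a ha.le) (hw_mono.mono Ioi_subset_Ici_self)
    (fun a ha b hb ↦ hw_gconvex a ha.le b hb.le) hx_anti hx_pos hy_pos
    (logSubmajorised_fin_iff.2 hmaj)
end
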